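/- If A is a set of positive integers with upper Banach density d*(A) > α for some 0 < α < 1, and t ≥ 2 is an integer, then the increasing enumeration b_1 < b_2 < ... of the product set B = A·A satisfies b_{n+t} - b_n ≤ 25·t²·α^{-4} for infinitely many n. -/

import Mathlib

/-- The upper Banach density of a set of natural numbers. -/
noncomputable def upperBanachDensity (A : Set ℕ) : ℝ :=
  Filter.limsup
    (fun K : ℕ => ⨆ x : ℕ, (Nat.card (A ∩ Set.Ioc x (x + K) : Set ℕ) : ℝ) / K)
    Filter.atTop

/-!
By averaging, `A` contains more than `α (d + 1)` elements of arbitrarily far windows of diameter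
`d = ⌊4 t / α²⌋`, hence more than `2 t (2 d + 1)` pairs of elements of such a window. These pairs
have at most `2 d + 1` different sums, so more than `2 t` of them share the same sum. A pair is
determined up to order by its sum and product, so these have more than `t` distinct products. The
products are close together: as `4 a b = (a + b)² - (a - b)²`, they differ by at most
`d² / 4 ≤ 4 t² / α⁴`.
-/

section WindowCounts

lemma ncard_inter_Ioc_le_add {ι : Type*} [LinearOrder ι] [LocallyFiniteOrder ι]
    (A : Set ι) (x y z : ι) :
    (A ∩ Set.Ioc x z).ncard ≤ (A ∩ Set.Ioc x y).ncard + (A ∩ Set.Ioc y z).ncard :=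
  calc
    (A ∩ Set.Ioc x z).ncard ≤ (A ∩ Set.Ioc x y ∪ A ∩ Set.Ioc y z).ncard := by
      rw [← Set.inter_union_distrib_left]
      exact Set.ncard_le_ncard (Set.inter_subset_inter_right A Set.Ioc_subset_Ioc_union_Ioc)
        (((Set.finite_Ioc x y).union (Set.finite_Ioc y z)).inter_of_right A)
    _ ≤ _ := Set.ncard_union_le _ _

lemma ncard_inter_Ioc_le (A : Set ℕ) (x K : ℕ) : (A ∩ Set.Ioc x (x + K)).ncard ≤ K :=
  calc
    (A ∩ Set.Ioc x (x + K)).ncard ≤ (Set.Ioc x (x + K)).ncard :=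
      Set.ncard_le_ncard Set.inter_subset_right
    _ = K := by rw [← Finset.coe_Ioc, Set.ncard_coe_finset, Nat.card_Ioc, Nat.add_sub_cancel_left]

variable {A : Set ℕ} {L M : ℕ} {c : ℝ}

lemma ncard_inter_Ioc_mul_le (h : ∀ x, M ≤ x → ((A ∩ Set.Ioc x (x + L)).ncard : ℝ) ≤ c)
    {y : ℕ} (hy : M ≤ y) (q : ℕ) : ((A ∩ Set.Ioc y (y + q * L)).ncard : ℝ) ≤ q * c := by
  induction q with
  | zero => simp
  | succ q ih =>
    have hsplit : ((A ∩ Set.Ioc y (y + (q + 1) * L)).ncard : ℝ) ≤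
        (A ∩ Set.Ioc y (y + q * L)).ncard +
          (A ∩ Set.Ioc (y + q * L) (y + q * L + L)).ncard := by
      rw [add_one_mul, ← add_assoc]
      exact_mod_cast ncard_inter_Ioc_le_add A _ _ _
    have hlast := h (y + q * L) (hy.trans (Nat.le_add_right _ _))
    push_cast
    linarith

lemma ncard_inter_Ioc_le_of_forall_ge (hL : 0 < L)
    (h : ∀ x, M ≤ x → ((A ∩ Set.Ioc x (x + L)).ncard : ℝ) ≤ c) (x K : ℕ) :
    ((A ∩ Set.Ioc x (x + K)).ncard : ℝ) ≤ M + (K / L + 1) * c := by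
  have hc : 0 ≤ c := (Nat.cast_nonneg _).trans (h M le_rfl)
  have hK : K ≤ (K / L + 1) * L := (Nat.lt_mul_of_div_lt (Nat.lt_succ_self _) hL).le
  have hcover : (A ∩ Set.Ioc x (x + K)).ncard ≤
      M + (A ∩ Set.Ioc (x + M) (x + M + (K / L + 1) * L)).ncard :=
    calc
      _ ≤ (A ∩ Set.Ioc x (x + M)).ncard + (A ∩ Set.Ioc (x + M) (x + K)).ncard :=
        ncard_inter_Ioc_le_add A _ _ _
      _ ≤ _ := by
        refine add_le_add (ncard_inter_Ioc_le A x M) (Set.ncard_le_ncard ?_)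
        exact Set.inter_subset_inter_right A (Set.Ioc_subset_Ioc_right (by lia))
  calc
    ((A ∩ Set.Ioc x (x + K)).ncard : ℝ)
      ≤ M + (A ∩ Set.Ioc (x + M) (x + M + (K / L + 1) * L)).ncard := mod_cast hcover
    _ ≤ M + ((K / L + 1 : ℕ) : ℝ) * c := by
      gcongr
      exact ncard_inter_Ioc_mul_le h (Nat.le_add_left M x) _
    _ ≤ M + (K / L + 1) * c := by
      push_cast
      gcongr
      exact Nat.cast_div_le

lemma upperBanachDensity_le_of_forall_ge (hL : 0 < L)
    (h : ∀ x, M ≤ x → ((A ∩ Set.Ioc x (x + L)).ncard : ℝ) ≤ c) :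
    upperBanachDensity A ≤ c / L := by
  have hlim : Filter.Tendsto (fun K : ℕ ↦ (M + c) / K + c / L) Filter.atTop (nhds (c / L)) := by
    simpa only [zero_add] using (tendsto_const_div_atTop_nhds_zero_nat (M + c)).add_const (c / L)
  rw [← hlim.limsup_eq]
  refine Filter.limsup_le_limsup ?_ ?_ hlim.isBoundedUnder_le
  · filter_upwards [Filter.eventually_gt_atTop 0] with K hK
    refine ciSup_le fun x ↦ ?_
    rw [Nat.card_coe_set_eq, div_le_iff₀ (by positivity)]
    refine (ncard_inter_Ioc_le_of_forall_ge hL h x K).trans_eq ?_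
    field_simp
    ring
  · exact Filter.IsCoboundedUnder.of_frequently_ge (a := 0) <| Filter.Frequently.of_forall
      fun K ↦ Real.iSup_nonneg fun x ↦ by positivity

lemma exists_lt_ncard_inter_Ioc {α : ℝ} (hd : α < upperBanachDensity A) (hL : 0 < L) (M : ℕ) :
    ∃ x, M ≤ x ∧ α * L < (A ∩ Set.Ioc x (x + L)).ncard := by
  by_contra! hsparse
  refine hd.not_ge ((upperBanachDensity_le_of_forall_ge hL hsparse).trans_eq ?_)
  field_simp

end WindowCounts

section EqualSums

open scoped Pointwise

lemma eq_and_eq_or_of_add_eq_of_mul_eq {R : Type*} [CommRing R] [NoZeroDivisors R] {a b c d : R}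
    (hadd : a + b = c + d) (hmul : a * b = c * d) : a = c ∧ b = d ∨ a = d ∧ b = c := by
  have hfactor : (a - c) * (a - d) = 0 := by linear_combination a * hadd - hmul
  rcases mul_eq_zero.mp hfactor with hac | had
  · exact .inl ⟨sub_eq_zero.mp hac, by linear_combination hadd - hac⟩
  · exact .inr ⟨sub_eq_zero.mp had, by linear_combination hadd - had⟩

lemma four_mul_mul_le_of_add_eq {R : Type*} [CommRing R] [LinearOrder R] [IsStrictOrderedRing R]
    {a b c d r : R} (hadd : a + b = c + d) (hcd : |c - d| ≤ r) :
    4 * (a * b) ≤ 4 * (c * d) + r ^ 2 :=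
  calc
    4 * (a * b) = (a + b) ^ 2 - (a - b) ^ 2 := by ring
    _ ≤ (c + d) ^ 2 := by rw [hadd]; exact sub_le_self _ (sq_nonneg _)
    _ = 4 * (c * d) + |c - d| ^ 2 := by rw [sq_abs]; ring
    _ ≤ 4 * (c * d) + r ^ 2 := by gcongr

lemma card_le_two_mul_card_image_mul {F : Finset (ℕ × ℕ)} {s : ℕ}
    (hF : ∀ p ∈ F, p.1 + p.2 = s) : F.card ≤ 2 * (F.image fun p ↦ p.1 * p.2).card := by
  refine Finset.card_le_mul_card_image F 2 fun m hm ↦ ?_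
  obtain ⟨p, hp, rfl⟩ := Finset.mem_image.mp hm
  suffices hfiber : {q ∈ F | q.1 * q.2 = p.1 * p.2} ⊆ {p, p.swap} from
    (Finset.card_le_card hfiber).trans Finset.card_le_two
  intro q hq
  obtain ⟨hqF, hmul⟩ := Finset.mem_filter.mp hq
  have hcases : (q.1 : ℤ) = p.1 ∧ (q.2 : ℤ) = p.2 ∨ (q.1 : ℤ) = p.2 ∧ (q.2 : ℤ) = p.1 :=
    eq_and_eq_or_of_add_eq_of_mul_eq (mod_cast (hF q hqF).trans (hF p hp).symm) (mod_cast hmul)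
  rw [Finset.mem_insert, Finset.mem_singleton, Prod.ext_iff, Prod.ext_iff]
  exact_mod_cast hcases

lemma exists_lt_card_filter_add_eq {S : Finset ℕ} {x d n : ℕ} (hS : S ⊆ Finset.Icc x (x + d))
    (hcard : (2 * d + 1) * n < S.card ^ 2) :
    ∃ s, n < {p ∈ S ×ˢ S | p.1 + p.2 = s}.card := by
  have hsums : ∀ p ∈ S ×ˢ S, p.1 + p.2 ∈ Finset.Icc (2 * x) (2 * (x + d)) := by
    intro p hp
    obtain ⟨hp₁, hp₂⟩ := Finset.mem_product.mp hp
    have h₁ := Finset.mem_Icc.mp (hS hp₁)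
    have h₂ := Finset.mem_Icc.mp (hS hp₂)
    exact Finset.mem_Icc.mpr (by lia)
  have hmany : (Finset.Icc (2 * x) (2 * (x + d))).card * n < (S ×ˢ S).card := by
    rw [Nat.card_Icc, Finset.card_product, ← sq]
    convert hcard using 2
    lia
  obtain ⟨s, -, hs⟩ := Finset.exists_lt_card_fiber_of_mul_lt_card_of_maps_to hsums hmany
  exact ⟨s, hs⟩

lemma exists_subset_mul_lt_card {S : Finset ℕ} {x d t : ℕ} (hS : S ⊆ Finset.Icc x (x + d))
    (hcard : (2 * d + 1) * (2 * t) < S.card ^ 2) :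
    ∃ T ⊆ S * S, t < T.card ∧ ∀ m ∈ T, ∀ n ∈ T, 4 * m ≤ 4 * n + d ^ 2 := by
  obtain ⟨s, hs⟩ := exists_lt_card_filter_add_eq hS hcard
  set F := {p ∈ S ×ˢ S | p.1 + p.2 = s}
  have hF : ∀ p ∈ F, (p.1 ∈ S ∧ p.2 ∈ S) ∧ p.1 + p.2 = s := fun p hp ↦ by
    simpa only [F, Finset.mem_filter, Finset.mem_product] using hp
  refine ⟨F.image fun p ↦ p.1 * p.2, ?_, ?_, ?_⟩
  · exact Finset.image_subset_iff.mpr fun p hp ↦ Finset.mul_mem_mul (hF p hp).1.1 (hF p hp).1.2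
  · have := card_le_two_mul_card_image_mul fun p hp ↦ (hF p hp).2
    lia
  · simp only [Finset.forall_mem_image]
    intro p hp q hq
    obtain ⟨⟨hq₁, hq₂⟩, hqs⟩ := hF q hq
    have hdiff : |(q.1 : ℤ) - q.2| ≤ d := by
      have h₁ := Finset.mem_Icc.mp (hS hq₁)
      have h₂ := Finset.mem_Icc.mp (hS hq₂)
      exact abs_le.mpr (by lia)
    have hadd : (p.1 : ℤ) + p.2 = q.1 + q.2 := mod_cast (hF p hp).2.trans hqs.symm
    exact_mod_cast four_mul_mul_le_of_add_eq hadd hdiff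

end EqualSums

section Enumeration

lemma exists_add_le_of_lt_card {J : Finset ℕ} {t : ℕ} (ht : t < J.card) :
    ∃ i ∈ J, ∃ j ∈ J, i + t ≤ j := by
  have hJ : J.Nonempty := Finset.card_pos.mp (by lia)
  refine ⟨J.min' hJ, J.min'_mem hJ, ?_⟩
  by_contra! hlt
  have hsub : J ⊆ Finset.Ico (J.min' hJ) (J.min' hJ + t) := fun j hj ↦
    Finset.mem_Ico.mpr ⟨J.min'_le j hj, hlt j hj⟩
  have := Finset.card_le_card hsub
  rw [Nat.card_Ico] at this
  lia

lemma exists_mem_add_le_of_subset_range {β : Type*} {b : ℕ → β} {T : Finset β} {t : ℕ}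
    (hT : (T : Set β) ⊆ Set.range b) (ht : t < T.card) :
    ∃ i j, i + t ≤ j ∧ b i ∈ T ∧ b j ∈ T := by
  classical
  rw [← Set.image_univ] at hT
  obtain ⟨J, -, rfl⟩ := Finset.subset_set_image_iff.mp hT
  obtain ⟨i, hi, j, hj, hij⟩ := exists_add_le_of_lt_card (ht.trans_le Finset.card_image_le)
  exact ⟨i, j, hij, Finset.mem_image_of_mem b hi, Finset.mem_image_of_mem b hj⟩

end Enumeration

section ProductSet

open scoped Pointwise

variable {α : ℝ} {A : Set ℕ}

lemma exists_finset_lt_card_sq (hα : 0 < α) (hd : α < upperBanachDensity A) {t d : ℕ}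
    (htd : 4 * t ≤ α ^ 2 * (d + 1)) (M : ℕ) :
    ∃ x, M < x ∧ ∃ S : Finset ℕ, (S : Set ℕ) ⊆ A ∧ S ⊆ Finset.Icc x (x + d) ∧
      (2 * d + 1) * (2 * t) < S.card ^ 2 := by
  obtain ⟨x, hMx, hx⟩ := exists_lt_ncard_inter_Ioc hd d.succ_pos M
  have hfin : (A ∩ Set.Ioc x (x + (d + 1))).Finite := (Set.finite_Ioc _ _).inter_of_right A
  refine ⟨x + 1, by lia, hfin.toFinset, ?_, fun a ha ↦ ?_, ?_⟩
  · rw [hfin.coe_toFinset]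
    exact Set.inter_subset_left
  · have hax : x < a ∧ a ≤ x + (d + 1) := (hfin.mem_toFinset.mp ha).2
    exact Finset.mem_Icc.mpr (by lia)
  · rw [← Set.ncard_eq_toFinset_card _ hfin]
    push_cast at hx
    have hlt : ((2 * d + 1) * (2 * t) : ℝ) < (A ∩ Set.Ioc x (x + (d + 1))).ncard ^ 2 :=
      calc
        ((2 * d + 1) * (2 * t) : ℝ) ≤ (4 * t) * (d + 1) := by
          linarith [t.cast_nonneg (α := ℝ)]
        _ ≤ (α ^ 2 * (d + 1)) * (d + 1) := by gcongr
        _ = (α * (d + 1)) ^ 2 := by ring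
        _ < _ := by gcongr
    exact_mod_cast hlt

lemma exists_clustered_finset_subset_mul (hα : 0 < α) (hd : α < upperBanachDensity A) (t M : ℕ) :
    ∃ T : Finset ℕ, (T : Set ℕ) ⊆ A * A ∧ t < T.card ∧ (∀ m ∈ T, M ≤ m) ∧
      ∀ m ∈ T, ∀ n ∈ T, (m : ℝ) - n ≤ 4 * t ^ 2 / α ^ 4 := by
  set d := ⌊4 * t / α ^ 2⌋₊
  have hd_le : (d : ℝ) ≤ 4 * t / α ^ 2 := Nat.floor_le (by positivity)
  have htd : 4 * t ≤ α ^ 2 * (d + 1) :=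
    (div_le_iff₀' (by positivity)).mp (Nat.lt_floor_add_one _).le
  obtain ⟨x, hMx, S, hSA, hSx, hcard⟩ := exists_finset_lt_card_sq hα hd htd M
  obtain ⟨T, hTS, htT, hclose⟩ := exists_subset_mul_lt_card hSx hcard
  refine ⟨T, ?_, htT, fun m hm ↦ ?_, fun m hm n hn ↦ ?_⟩
  · calc
      (T : Set ℕ) ⊆ (S : Set ℕ) * S := mod_cast hTS
      _ ⊆ A * A := Set.mul_subset_mul hSA hSA
  · obtain ⟨a, ha, a', ha', rfl⟩ := Finset.mem_mul.mp (hTS hm)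
    have hxa := (Finset.mem_Icc.mp (hSx ha)).1
    have hxa' := (Finset.mem_Icc.mp (hSx ha')).1
    exact (hMx.le.trans hxa).trans (Nat.le_mul_of_pos_right a (by lia))
  · have hmn : (4 * m : ℝ) ≤ 4 * n + d ^ 2 := mod_cast hclose m hm n hn
    calc
      (m : ℝ) - n ≤ d ^ 2 / 4 := by linarith
      _ ≤ (4 * t / α ^ 2) ^ 2 / 4 := by gcongr
      _ = 4 * t ^ 2 / α ^ 4 := by ring

theorem stmt3_general (hα : 0 < α) (hd : α < upperBanachDensity A) (t : ℕ) {b : ℕ → ℕ}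
    (hb : StrictMono b) (hrange : A * A ⊆ Set.range b) (N : ℕ) :
    ∃ n, N ≤ n ∧ (b (n + t) : ℝ) - b n ≤ 4 * t ^ 2 / α ^ 4 := by
  obtain ⟨T, hTA, htT, hlarge, hclose⟩ := exists_clustered_finset_subset_mul hα hd t (b N)
  obtain ⟨n, k, hnk, hn, hk⟩ := exists_mem_add_le_of_subset_range (hTA.trans hrange) htT
  refine ⟨n, hb.le_iff_le.mp (hlarge _ hn), ?_⟩
  calc
    (b (n + t) : ℝ) - b n ≤ b k - b n := by
      gcongr
      exact hb.monotone hnk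
    _ ≤ 4 * t ^ 2 / α ^ 4 := hclose _ hk _ hn

end ProductSet

/-- If `d*(A) > α` and `t ≥ 2`, then the increasing enumeration `b` of `B = A·A`
satisfies `b (n+t) - b n ≤ 25 t² α⁻⁴` infinitely often. -/
theorem stmt3 (α : ℝ) (hα0 : 0 < α) (hα1 : α < 1) (t : ℕ) (ht : 2 ≤ t)
    (A : Set ℕ) (hA : 0 ∉ A) (hd : α < upperBanachDensity A)
    (b : ℕ → ℕ) (hb : StrictMono b)
    (hrange : ∀ m, m ∈ Set.range b ↔ ∃ a ∈ A, ∃ a' ∈ A, m = a * a') :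
    ∀ N : ℕ, ∃ n, N ≤ n ∧ ((b (n + t) : ℝ) - b n) ≤ 25 * t ^ 2 / α ^ 4 := by
  intro N
  obtain ⟨n, hNn, hn⟩ := stmt3_general hα0 hd t hb
    (Set.mul_subset_iff.mpr fun a ha a' ha' ↦ (hrange _).mpr ⟨a, ha, a', ha', rfl⟩) N
  exact ⟨n, hNn, hn.trans (by gcongr; norm_num)⟩
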